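/- Let G be a finite abelian group acting faithfully on a finite connected graph Γ such that the action preserves a fixed cyclic ordering of edges at each vertex and acts freely on the edge set. Then for every vertex μ of Γ, the valency of the orbit vertex μ̄ in the orbit graph Γ/G divides the valency of μ. -/

import Mathlib

/-- A Brauer graph `(Γ, 𝔬, m)`, presented via half-edges: `H` is the (finite, nonempty)
set of half-edges, `σ` is the successor permutation whose cycle at a vertex lists the
incident half-edges in the cyclic order `𝔬` (a loop contributes two half-edges, i.e. is
"listed twice"), `ι` is the fixed-point-free involution pairing the two half-edges of
each edge, `v` assigns to each half-edge its vertex (so the fibres of `v` are exactly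
the cycles of `σ`), the graph is connected, and `m` is the multiplicity function. -/
structure BrauerGraph where
  H : Type
  V : Type
  fintypeH : Fintype H
  decEqH : DecidableEq H
  fintypeV : Fintype V
  decEqV : DecidableEq V
  nonemptyH : Nonempty H
  σ : Equiv.Perm H
  ι : Equiv.Perm H
  ι_invol : ∀ h, ι (ι h) = h
  ι_ne : ∀ h, ι h ≠ h
  v : H → V
  v_surj : Function.Surjective v
  v_eq_iff : ∀ h h', v h = v h' ↔ ∃ n : ℤ, (σ ^ n) h = h'
  connected : ∀ h h' : H, ∃ g ∈ Subgroup.closure ({σ, ι} : Set (Equiv.Perm H)), g h = h'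
  m : V → ℕ
  m_pos : ∀ μ, 0 < m μ

attribute [instance] BrauerGraph.fintypeH BrauerGraph.decEqH
attribute [instance] BrauerGraph.fintypeV BrauerGraph.decEqV

namespace BrauerGraph

variable (Γ : BrauerGraph)

/-- The valency of a vertex: the number of incident half-edges (loops counted twice). -/
noncomputable def val (μ : Γ.V) : ℕ := Nat.card {h : Γ.H // Γ.v h = μ}

end BrauerGraph

/-- A Brauer action of a group `G` on a Brauer graph: a faithful action on half-edges
commuting with the successor permutation (i.e. orientation/successor preserving) and
with the edge involution (i.e. an action by graph automorphisms), and preserving the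
multiplicity function. -/
structure BrauerAction (G : Type) [Group G] (Γ : BrauerGraph) where
  e : G →* Equiv.Perm Γ.H
  faithful : Function.Injective e
  comm_σ : ∀ g h, e g (Γ.σ h) = Γ.σ (e g h)
  comm_ι : ∀ g h, e g (Γ.ι h) = Γ.ι (e g h)
  m_inv : ∀ g h, Γ.m (Γ.v (e g h)) = Γ.m (Γ.v h)

namespace BrauerAction

variable {G : Type} [Group G] {Γ : BrauerGraph}

/-- A free Brauer action: the action is free on the set of edges (loops counted twice,
i.e. on half-edges). -/
def IsFree (A : BrauerAction G Γ) : Prop := ∀ (g : G) (h : Γ.H), A.e g h = h → g = 1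

/-- The orbit equivalence relation of the action on half-edges. -/
def orbSetoid (A : BrauerAction G Γ) : Setoid Γ.H where
  r h h' := ∃ g : G, A.e g h = h'
  iseqv := by
    refine ⟨fun h => ⟨1, by simp⟩, ?_, ?_⟩
    · rintro h h' ⟨g, hg⟩
      exact ⟨g⁻¹, by rw [← hg, ← Equiv.Perm.mul_apply, ← map_mul]; simp⟩
    · rintro a b c ⟨g₁, hg₁⟩ ⟨g₂, hg₂⟩
      exact ⟨g₂ * g₁, by rw [map_mul, Equiv.Perm.mul_apply, hg₁, hg₂]⟩

/-- The orbit equivalence relation of the action restricted to a subset of half-edges. -/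
def subOrbSetoid (A : BrauerAction G Γ) (P : Γ.H → Prop) : Setoid {h : Γ.H // P h} where
  r p q := ∃ g : G, A.e g p.1 = q.1
  iseqv := by
    refine ⟨fun p => ⟨1, by simp⟩, ?_, ?_⟩
    · rintro p q ⟨g, hg⟩
      exact ⟨g⁻¹, by rw [← hg, ← Equiv.Perm.mul_apply, ← map_mul]; simp⟩
    · rintro a b c ⟨g₁, hg₁⟩ ⟨g₂, hg₂⟩
      exact ⟨g₂ * g₁, by rw [map_mul, Equiv.Perm.mul_apply, hg₁, hg₂]⟩

/-- The induced action of `g ∈ G` on vertices (defined via a chosen half-edge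
in the fibre of the vertex). -/
noncomputable def vmap (A : BrauerAction G Γ) (g : G) (μ : Γ.V) : Γ.V :=
  Γ.v (A.e g (Γ.v_surj μ).choose)

/-- The valency, in the orbit graph `Γ/G`, of the orbit vertex `μ̄` of `μ`: the number
of `G`-orbits of half-edges incident with a vertex in the orbit of `μ`. -/
noncomputable def orbVal (A : BrauerAction G Γ) (μ : Γ.V) : ℕ :=
  Nat.card (Quotient (A.subOrbSetoid (fun h => ∃ a : G, Γ.v (A.e a h) = μ)))

/-- The multiplicity function `m̄(μ̄) = val(μ)·m(μ)/val(μ̄)` of the orbit graph,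
expressed on representatives. -/
noncomputable def mbar (A : BrauerAction G Γ) (μ : Γ.V) : ℕ :=
  Γ.val μ * Γ.m μ / A.orbVal μ

end BrauerAction

namespace BrauerGraph

variable (Γ : BrauerGraph) {G : Type} [CommGroup G]

/-- `ω_μ`: the product of the values of a successor weighting `W` over all successor
pairs at the vertex `μ` (a successor pair `(i, σ i)` is identified with the half-edge
`i`). -/
noncomputable def omega (W : Γ.H → G) (μ : Γ.V) : G :=
  ∏ h ∈ Finset.univ.filter (fun h => Γ.v h = μ), W h

/-- `ω(i₁, i_{r+1})`: the product of the weights along the first `r` steps of the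
successor sequence of the half-edge `h`. -/
noncomputable def wpath (W : Γ.H → G) (h : Γ.H) (r : ℕ) : G :=
  ∏ t ∈ Finset.range r, W ((Γ.σ ^ t) h)

/-- The generating relation for the equivalence classes `[i, H_{μ,s}]` defining the
vertices of the Brauer covering graph `Δ_W`: a pair `(i, g)` (representing the pair of
`i` and the coset `H_{v i}·g`) is related to `(σ i, g·W(i))`, and to `(i, g·ω_{v i})`
(the latter identifies representatives of the same coset of `H_μ = ⟨ω_μ⟩`). -/
def covRel (W : Γ.H → G) : Γ.H × G → Γ.H × G → Prop := fun p q =>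
  (q.1 = Γ.σ p.1 ∧ q.2 = p.2 * W p.1) ∨ (q.1 = p.1 ∧ q.2 = p.2 * Γ.omega W (Γ.v p.1))

end BrauerGraph

/-!
The half-edges at `μ` form a single cycle of the successor permutation `σ`, so `val μ` is the
period of `σ` at any one of them. Since `σ` commutes with `G`, it descends to the half-edges at
`μ̄`, and every half-edge at `μ̄` has a representative at `μ`; they therefore form a single cycle
too, and `val μ̄` is the period of the image of a half-edge at `μ`. Periods can only drop to a
divisor under an equivariant map.
-/

section Semiconj

open Function Equiv.Perm

variable {α β : Type*} {s : Equiv.Perm α} {t : Equiv.Perm β} {f : α → β}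

theorem semiconj_zpow (hst : Semiconj f s t) : ∀ n : ℤ, Semiconj f ⇑(s ^ n) ⇑(t ^ n)
  | .ofNat n => by
    simpa only [Int.ofNat_eq_natCast, zpow_natCast, coe_pow] using hst.iterate_right n
  | .negSucc n => by
    have hpow : Semiconj f ⇑(s ^ (n + 1)) ⇑(t ^ (n + 1)) := by
      simpa only [coe_pow] using hst.iterate_right (n + 1)
    simp only [zpow_negSucc]
    exact hpow.inverses_right (s ^ (n + 1)).right_inv (t ^ (n + 1)).left_inv

theorem sameCycle_map_of_semiconj (hst : Semiconj f s t) {x y : α} (hxy : s.SameCycle x y) :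
    t.SameCycle (f x) (f y) := by
  obtain ⟨n, rfl⟩ := hxy
  exact ⟨n, (semiconj_zpow hst n x).symm⟩

-- For infinite `α` both sides are `0`.
theorem natCard_eq_minimalPeriod_of_sameCycle {x : α} (hx : ∀ y, s.SameCycle x y) :
    Nat.card α = minimalPeriod s x := by
  have orbit_eq_univ : MulAction.orbit (Subgroup.zpowers s) x = Set.univ :=
    Set.eq_univ_of_forall fun y ↦ by
      obtain ⟨n, rfl⟩ := hx y
      exact ⟨⟨s ^ n, n, rfl⟩, rfl⟩
  calc
    Nat.card α = Nat.card (MulAction.orbit (Subgroup.zpowers s) x) := by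
      rw [orbit_eq_univ, Nat.card_univ]
    _ = Nat.card (ZMod (minimalPeriod s x)) :=
      Nat.card_congr (MulAction.orbitZPowersEquiv s x)
    _ = minimalPeriod s x := Nat.card_zmod _

theorem natCard_dvd_natCard_of_semiconj (hst : Semiconj f s t) (hf : Surjective f)
    (hs : ∀ x y, s.SameCycle x y) : Nat.card β ∣ Nat.card α := by
  rcases isEmpty_or_nonempty α with _ | ⟨⟨x⟩⟩
  · simp only [Nat.card_of_isEmpty, dvd_zero]
  · have ht : ∀ y, t.SameCycle (f x) y :=
      hf.forall.mpr fun y ↦ sameCycle_map_of_semiconj hst (hs x y)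
    rw [natCard_eq_minimalPeriod_of_sameCycle (hs x), natCard_eq_minimalPeriod_of_sameCycle ht]
    exact ((isPeriodicPt_minimalPeriod s x).map hst).minimalPeriod_dvd

end Semiconj

namespace BrauerGraph

variable (Γ : BrauerGraph)

theorem v_σ (h : Γ.H) : Γ.v (Γ.σ h) = Γ.v h :=
  ((Γ.v_eq_iff h (Γ.σ h)).mpr ⟨1, by rw [zpow_one]⟩).symm

/-- The successor permutation `σ` restricted to the half-edges at the vertex `μ`: the cyclic
ordering at `μ`. -/
def succAt (μ : Γ.V) : Equiv.Perm {h : Γ.H // Γ.v h = μ} :=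
  Γ.σ.subtypePerm fun h ↦ by rw [Γ.v_σ]

theorem sameCycle_succAt {μ : Γ.V} (x y : {h : Γ.H // Γ.v h = μ}) :
    (Γ.succAt μ).SameCycle x y :=
  Equiv.Perm.sameCycle_subtypePerm.mpr ((Γ.v_eq_iff x y).mp (x.2.trans y.2.symm))

end BrauerGraph

namespace BrauerAction

variable {G : Type} [Group G] {Γ : BrauerGraph} (A : BrauerAction G Γ) (μ : Γ.V)

/-- The half-edge `h` is incident with some vertex in the `G`-orbit of `μ`. -/
def IncidentToOrbit (h : Γ.H) : Prop := ∃ a : G, Γ.v (A.e a h) = μ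

/-- The half-edges at the vertex `μ̄` of the orbit graph `Γ/G`; `A.orbVal μ` counts them. -/
abbrev OrbitHalfEdge : Type := Quotient (A.subOrbSetoid (A.IncidentToOrbit μ))

theorem incidentToOrbit_σ_iff (h : Γ.H) :
    A.IncidentToOrbit μ (Γ.σ h) ↔ A.IncidentToOrbit μ h := by
  simp only [IncidentToOrbit, A.comm_σ, Γ.v_σ]

/-- The cyclic ordering that `σ` induces at the vertex `μ̄` of the orbit graph `Γ/G`. -/
def orbitSuccAt : Equiv.Perm (A.OrbitHalfEdge μ) :=
  Quotient.congr (Γ.σ.subtypePerm (A.incidentToOrbit_σ_iff μ)) fun p q ↦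
    exists_congr fun g ↦ by
      rw [Equiv.Perm.subtypePerm_apply, Equiv.Perm.subtypePerm_apply, A.comm_σ,
        Γ.σ.injective.eq_iff]

/-- The projection from the half-edges at `μ` to those at `μ̄`. -/
def orbitProj (h : {h : Γ.H // Γ.v h = μ}) : A.OrbitHalfEdge μ :=
  Quotient.mk _ ⟨h, 1, by rw [map_one, Equiv.Perm.one_apply, h.2]⟩

theorem orbitProj_surjective : Function.Surjective (A.orbitProj μ) := by
  rintro ⟨h, a, ha⟩
  refine ⟨⟨A.e a h, ha⟩, Quotient.sound ⟨a⁻¹, ?_⟩⟩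
  rw [map_inv, Equiv.Perm.inv_eq_iff_eq]

theorem orbitProj_semiconj :
    Function.Semiconj (A.orbitProj μ) (Γ.succAt μ) (A.orbitSuccAt μ) :=
  fun _ ↦ rfl

end BrauerAction

theorem orbVal_dvd_val_general {G : Type} [Group G] (Γ : BrauerGraph)
    (A : BrauerAction G Γ) (μ : Γ.V) : A.orbVal μ ∣ Γ.val μ :=
  natCard_dvd_natCard_of_semiconj (A.orbitProj_semiconj μ) (A.orbitProj_surjective μ)
    Γ.sameCycle_succAt

/-- If a finite abelian group `G` acts faithfully on a finite connected
graph `Γ`, preserving the cyclic ordering of edges at each vertex (i.e. commuting with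
the successor permutation) and freely on the edge set, then for every vertex `μ` the
valency of the orbit vertex `μ̄` in `Γ/G` divides the valency of `μ`. -/
theorem orbVal_dvd_val {G : Type} [CommGroup G] [Fintype G]
    (Γ : BrauerGraph) (A : BrauerAction G Γ) (hfree : A.IsFree) (μ : Γ.V) :
    A.orbVal μ ∣ Γ.val μ :=
  orbVal_dvd_val_general Γ A μ
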